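/- arXiv:2602.13468 — 3 statements merged into one kernel-verified Lean document; each statement's English description precedes it below -/
import Mathlib

section
/- Let p be a prime, r ≥ 1, and let G₁ and G₂ be two equivalent Reduced Internal Degree Matrices of size k × n over (ℤ/p^r)[D], i.e., both have full row rank, both have the same row span over the Laurent series ring (ℤ/p^r)((D)), and each has internal degree minimal among all polynomial generator matrices of that row span. Then the monic greatest common divisor in 𝔽_p[D] of the k × k minors of the reduction of G₁ modulo p equals the monic greatest common divisor in 𝔽_p[D] of the k × k minors of the reduction of G₂ modulo p; that is, Δ_p(G₁) = Δ_p(G₂). -/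
open Polynomial Matrix

/-- The natural ring homomorphism from polynomials over a commutative ring to Laurent series. -/
noncomputable def polyToLS (R : Type*) [CommRing R] : Polynomial R →+* LaurentSeries R :=
  (HahnSeries.ofPowerSeries ℤ R).comp Polynomial.coeToPowerSeries.ringHom

/-- The `k × k` minor of a `k × n` matrix determined by a choice of columns. -/
noncomputable def minorOn {R : Type*} [CommRing R] {k n : ℕ}
    (G : Matrix (Fin k) (Fin n) R) (c : Fin k → Fin n) : R :=
  (G.submatrix id c).det

/-- A polynomial matrix has full row rank if some maximal minor is a non-zero-divisor. -/
def FullRowRank {R : Type*} [CommRing R] {k n : ℕ}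
    (G : Matrix (Fin k) (Fin n) (Polynomial R)) : Prop :=
  ∃ c : Fin k → Fin n, minorOn G c ∈ nonZeroDivisors (Polynomial R)

/-- The free convolutional code (row span over the Laurent series ring) generated by `G`. -/
noncomputable def code {R : Type*} [CommRing R] {k n : ℕ}
    (G : Matrix (Fin k) (Fin n) (Polynomial R)) : Set (Fin n → LaurentSeries R) :=
  {v | ∃ u : Fin k → LaurentSeries R, v = Matrix.vecMul u (G.map (polyToLS R))}

/-- The internal degree of a polynomial matrix: the maximal degree of its maximal minors. -/
noncomputable def intdeg {R : Type*} [CommRing R] {k n : ℕ}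
    (G : Matrix (Fin k) (Fin n) (Polynomial R)) : WithBot ℕ :=
  Finset.univ.sup fun c : Fin k → Fin n => (minorOn G c).degree

/-- Coefficientwise/entrywise reduction modulo `p` of a matrix over `(ℤ/p^r)[D]`. -/
noncomputable def reduceMod (p r : ℕ) (hr : r ≠ 0) {k n : ℕ}
    (G : Matrix (Fin k) (Fin n) (Polynomial (ZMod (p ^ r)))) :
    Matrix (Fin k) (Fin n) (Polynomial (ZMod p)) :=
  G.map (Polynomial.map (ZMod.castHom (dvd_pow_self p hr) (ZMod p)))

/-- The monic greatest common divisor in `𝔽_p[D]` of the maximal minors of a matrix. -/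
noncomputable def gcdMinors {p : ℕ} [Fact p.Prime] {k n : ℕ}
    (G : Matrix (Fin k) (Fin n) (Polynomial (ZMod p))) : Polynomial (ZMod p) :=
  Finset.univ.gcd fun c : Fin k → Fin n => minorOn G c

/-- A vector of Laurent series has finite Hamming weight iff each component has
finitely many nonzero coefficients. -/
def FiniteWeight {R : Type*} [CommRing R] {m : ℕ} (v : Fin m → LaurentSeries R) : Prop :=
  ∀ i, (v i).support.Finite

/-- A polynomial generator matrix is non-catastrophic if every input whose output has finite
Hamming weight itself has finite Hamming weight. -/
noncomputable def NonCatastrophic {R : Type*} [CommRing R] {k n : ℕ}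
    (G : Matrix (Fin k) (Fin n) (Polynomial R)) : Prop :=
  ∀ u : Fin k → LaurentSeries R,
    FiniteWeight (Matrix.vecMul u (G.map (polyToLS R))) → FiniteWeight u

/-- The dual of a set of words: all vectors orthogonal to every word. -/
def dualCode {R : Type*} [CommRing R] {n : ℕ}
    (C : Set (Fin n → LaurentSeries R)) : Set (Fin n → LaurentSeries R) :=
  {v | ∀ w ∈ C, ∑ i, v i * w i = 0}

/-!
Let `φ : R → F` be a surjection onto a field with nil kernel, for instance `ℤ/p^r → 𝔽_p`. The
gcd of the minors of the reduction of a reduced internal degree matrix `G` only depends on the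
code because the row span of that reduction over `F[X]` does: it is the reduction of the set of
all polynomial codewords. Indeed, Cramer's rule for a minor that does not vanish modulo `ker φ`
gives, for every polynomial codeword `v`, a monic `g` with `g v = a G`. Dividing `a = q g + r`
by `g` and subtracting `q G` from `v` leaves a codeword `w` with `g w = r G` and `deg r < deg g`.
If some `r i` were nonzero modulo `ker φ`, replacing row `i` of `G` by `w` would multiply
all minors by `r i / g`, contradicting the minimality of the internal degree. Hence `r`, and
with it `w`, vanishes modulo `ker φ`.
-/

section NilpotentKernel

variable {R S : Type*} [CommRing R] [CommRing S] {φ : R →+* S}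

theorem isLocalHom_of_ker_le_nilradical (hφ : Function.Surjective φ)
    (hker : RingHom.ker φ ≤ nilradical R) : IsLocalHom φ where
  map_nonunit a ha := by
    obtain ⟨b, hb⟩ := hφ ↑ha.unit⁻¹
    have hnil : IsNilpotent (a * b - 1) := hker <| by simp [RingHom.mem_ker, hb]
    exact isUnit_of_mul_isUnit_left (y := b) (by simpa using hnil.isUnit_add_one)

theorem isNilpotent_of_map_eq_zero (hker : RingHom.ker φ ≤ nilradical R) {f : R[X]}
    (hf : f.map φ = 0) : IsNilpotent f :=
  Polynomial.isNilpotent_iff.2 fun i => hker <| by rw [RingHom.mem_ker, ← coeff_map, hf, coeff_zero]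

end NilpotentKernel

section LaurentSeries

variable {R : Type*} [CommRing R]

theorem polyToLS_injective : Function.Injective (polyToLS R) :=
  HahnSeries.ofPowerSeries_injective.comp (Polynomial.coe_injective R)

theorem isUnit_polyToLS_X : IsUnit (polyToLS R X) := by
  refine .of_mul_eq_one (HahnSeries.single (-1) 1) ?_
  simp [polyToLS]

theorem isUnit_polyToLS_of_isUnit_coeff_zero {f : R[X]} (hf : IsUnit (f.coeff 0)) :
    IsUnit (polyToLS R f) :=
  (PowerSeries.isUnit_iff_constantCoeff.2 (by simpa using hf)).map (HahnSeries.ofPowerSeries ℤ R)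

end LaurentSeries

section ResidueField

variable {R F : Type*} [CommRing R] [Field F] {φ : R →+* F}

-- If `g` is a monic lift of `f` up to a scalar, then `f * C b = g - ν` with `ν` nilpotent
-- divides `g ^ N - ν ^ N = g ^ N`.
theorem exists_monic_dvd_of_map_ne_zero (hφ : Function.Surjective φ)
    (hker : RingHom.ker φ ≤ nilradical R) {f : R[X]} (hf : f.map φ ≠ 0) :
    ∃ g : R[X], g.Monic ∧ f ∣ g := by
  obtain ⟨b, hb⟩ := hφ (f.map φ).leadingCoeff⁻¹
  have hmonic : ((f * C b).map φ).Monic := by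
    simpa [hb] using monic_mul_leadingCoeff_inv hf
  obtain ⟨g, hg, -, hg_monic⟩ := lifts_and_degree_eq_and_monic ⟨f * C b, rfl⟩ hmonic
  obtain ⟨N, hN⟩ : IsNilpotent (g - f * C b) :=
    isNilpotent_of_map_eq_zero hker (by simp [hg])
  refine ⟨g ^ N, hg_monic.pow N, (dvd_mul_right f (C b)).trans ?_⟩
  simpa [hN] using sub_dvd_pow_sub_pow g (g - f * C b) N

theorem mem_nonZeroDivisors_iff_map_ne_zero (hφ : Function.Surjective φ)
    (hker : RingHom.ker φ ≤ nilradical R) {f : R[X]} :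
    f ∈ nonZeroDivisors R[X] ↔ f.map φ ≠ 0 := by
  have := φ.domain_nontrivial
  refine ⟨fun hf hf0 => ?_, fun hf => ?_⟩
  · obtain ⟨N, hN⟩ := isNilpotent_of_map_eq_zero hker hf0
    exact zero_notMem_nonZeroDivisors (hN ▸ pow_mem hf N)
  · obtain ⟨g, hg_monic, s, rfl⟩ := exists_monic_dvd_of_map_ne_zero hφ hker hf
    exact (mul_mem_nonZeroDivisors.1 hg_monic.mem_nonZeroDivisors).1

-- Modulo nilpotents `f` is `X ^ m * g` with `g` having an invertible constant coefficient.
theorem isUnit_polyToLS_of_map_ne_zero (hφ : Function.Surjective φ)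
    (hker : RingHom.ker φ ≤ nilradical R) {f : R[X]} (hf : f.map φ ≠ 0) :
    IsUnit (polyToLS R f) := by
  obtain ⟨m, g₀, hg₀, hfg₀⟩ := WfDvdMonoid.max_power_factor hf irreducible_X
  obtain ⟨g, rfl⟩ := Polynomial.map_surjective φ hφ g₀
  have hg : IsUnit (polyToLS R g) := by
    have := isLocalHom_of_ker_le_nilradical hφ hker
    refine isUnit_polyToLS_of_isUnit_coeff_zero (isUnit_of_map_unit φ _ (IsUnit.mk0 _ ?_))
    rwa [← coeff_map, Ne, ← X_dvd_iff]
  have hnil : IsNilpotent (f - X ^ m * g) :=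
    isNilpotent_of_map_eq_zero hker (by simp [hfg₀])
  have hXg : IsUnit (polyToLS R (X ^ m * g)) := by
    rw [map_mul, map_pow]
    exact (isUnit_polyToLS_X.pow m).mul hg
  simpa using (hnil.map (polyToLS R)).isUnit_add_left_of_commute hXg (.all _ _)

end ResidueField

section MonicDivision

variable {R : Type*} [CommRing R]

theorem degree_lt_of_monic_mul_eq {f g x y : R[X]} {D : WithBot ℕ} (hf : f.Monic)
    (hgf : g.degree < f.degree) (h : f * x = g * y) (hy : y.degree ≤ D) (hD : ⊥ < D) :
    x.degree < D := by
  have hdeg : f.degree + x.degree ≤ g.degree + D := calc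
    f.degree + x.degree = (g * y).degree := by
      rw [← h, hf.degree_mul_comm, hf.degree_mul, add_comm]
    _ ≤ g.degree + D := (degree_mul_le g y).trans (by gcongr)
  have : g.degree + D < f.degree + D := WithBot.add_lt_add_right hD.ne' hgf
  exact lt_of_add_lt_add_left (hdeg.trans_lt this)

theorem smul_sub_divByMonic_vecMul {k n : ℕ} {G : Matrix (Fin k) (Fin n) R[X]} {g : R[X]}
    {v : Fin n → R[X]} {a : Fin k → R[X]} (h : g • v = a ᵥ* G) :
    g • (v - (fun i => a i /ₘ g) ᵥ* G) = (fun i => a i %ₘ g) ᵥ* G := by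
  rw [smul_sub, h, ← smul_vecMul, ← sub_vecMul]
  congr 1
  ext1 i
  exact (modByMonic_eq_sub_mul_div (a i) g).symm

end MonicDivision

section Minors

variable {A B : Type*} [CommRing A] [CommRing B] {k n : ℕ}

theorem minorOn_map (f : A →+* B) (G : Matrix (Fin k) (Fin n) A) (c : Fin k → Fin n) :
    minorOn (G.map f) c = f (minorOn G c) :=
  (f.map_det (G.submatrix id c)).symm

theorem minorOn_mul (T : Matrix (Fin k) (Fin k) A) (G : Matrix (Fin k) (Fin n) A)
    (c : Fin k → Fin n) : minorOn (T * G) c = T.det * minorOn G c :=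
  Matrix.det_mul T (G.submatrix id c)

theorem minorOn_updateRow (G : Matrix (Fin k) (Fin n) A) (i : Fin k) (v : Fin n → A)
    (c : Fin k → Fin n) :
    minorOn (G.updateRow i v) c = ((G.submatrix id c).updateRow i (v ∘ c)).det := by
  rw [minorOn]
  congr 1
  ext a b
  simp [updateRow_apply]

theorem minorOn_updateRow_smul (G : Matrix (Fin k) (Fin n) A) (i : Fin k) (s : A)
    (v : Fin n → A) (c : Fin k → Fin n) :
    minorOn (G.updateRow i (s • v)) c = s * minorOn (G.updateRow i v) c := by
  simp only [minorOn_updateRow]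
  exact det_updateRow_smul _ i s (v ∘ c)

theorem minorOn_updateRow_vecMul (G : Matrix (Fin k) (Fin n) A) (i : Fin k) (a : Fin k → A)
    (c : Fin k → Fin n) : minorOn (G.updateRow i (a ᵥ* G)) c = a i * minorOn G c := by
  have hrow : (a ᵥ* G) ∘ c = ∑ l, a l • G.submatrix id c l :=
    vecMul_eq_sum a (G.submatrix id c)
  rw [minorOn_updateRow, hrow, det_updateRow_sum, smul_eq_mul, minorOn]

-- Cramer's rule: the coefficients are `(v ∘ c) * adjugate`.
theorem exists_minorOn_smul_eq_vecMul {f : A →+* B} (hf : Function.Injective f)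
    (G : Matrix (Fin k) (Fin n) A) (c : Fin k → Fin n) {v : Fin n → A} {u : Fin k → B}
    (hv : f ∘ v = u ᵥ* G.map f) : ∃ a : Fin k → A, minorOn G c • v = a ᵥ* G := by
  set M := G.submatrix id c
  have hvc : f ∘ v ∘ c = u ᵥ* f.mapMatrix M := congrArg (· ∘ c) hv
  have ha : f ∘ ((v ∘ c) ᵥ* M.adjugate) = f M.det • u := calc
    f ∘ ((v ∘ c) ᵥ* M.adjugate) = (f ∘ v ∘ c) ᵥ* f.mapMatrix M.adjugate :=
      _root_.funext (f.map_vecMul _ _)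
    _ = f M.det • u := by
      rw [hvc, vecMul_vecMul, f.map_adjugate, mul_adjugate, vecMul_smul, vecMul_one, f.map_det]
  refine ⟨(v ∘ c) ᵥ* M.adjugate, hf.comp_left ?_⟩
  calc f ∘ (minorOn G c • v) = f M.det • f ∘ v := funext fun i => map_mul f _ _
    _ = (f ∘ ((v ∘ c) ᵥ* M.adjugate)) ᵥ* G.map f := by rw [ha, hv, smul_vecMul]
    _ = f ∘ (((v ∘ c) ᵥ* M.adjugate) ᵥ* G) := (_root_.funext (f.map_vecMul _ _)).symm

theorem gcd_minorOn_dvd_gcd_minorOn_mul [NormalizedGCDMonoid A] (T : Matrix (Fin k) (Fin k) A)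
    (G : Matrix (Fin k) (Fin n) A) :
    Finset.univ.gcd (minorOn G) ∣ Finset.univ.gcd (minorOn (T * G)) :=
  Finset.dvd_gcd fun c hc => by
    rw [minorOn_mul]
    exact (Finset.gcd_dvd hc).mul_left _

end Minors

section Codes

variable {R : Type*} [CommRing R] {k n : ℕ}

theorem row_mem_code (G : Matrix (Fin k) (Fin n) R[X]) (i : Fin k) :
    polyToLS R ∘ G i ∈ code G :=
  ⟨Pi.single i 1, (single_one_vecMul i (G.map (polyToLS R))).symm⟩

theorem sub_vecMul_mem_code {G : Matrix (Fin k) (Fin n) R[X]} {v : Fin n → R[X]}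
    (hv : polyToLS R ∘ v ∈ code G) (q : Fin k → R[X]) :
    polyToLS R ∘ (v - q ᵥ* G) ∈ code G := by
  obtain ⟨u, hu⟩ := hv
  refine ⟨u - polyToLS R ∘ q, ?_⟩
  rw [sub_vecMul, ← hu]
  ext1 i
  simp [RingHom.map_vecMul]

theorem exists_map_eq_mul_of_row_mem_code {G G' : Matrix (Fin k) (Fin n) R[X]}
    (hrows : ∀ i, polyToLS R ∘ G' i ∈ code G) :
    ∃ T : Matrix (Fin k) (Fin k) (LaurentSeries R),
      G'.map (polyToLS R) = T * G.map (polyToLS R) := by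
  choose T hT using hrows
  exact ⟨of T, Matrix.ext fun i j => congrFun (hT i) j⟩

theorem degree_minorOn_le_intdeg (G : Matrix (Fin k) (Fin n) R[X]) (c : Fin k → Fin n) :
    (minorOn G c).degree ≤ intdeg G :=
  Finset.le_sup (f := fun c => (minorOn G c).degree) (Finset.mem_univ c)

/-- A reduced internal degree matrix: a full row rank polynomial generator matrix of least internal
degree among all those generating the same code. -/
def IsRIDM (G : Matrix (Fin k) (Fin n) R[X]) : Prop :=
  FullRowRank G ∧ ∀ G' : Matrix (Fin k) (Fin n) R[X],
    FullRowRank G' → code G' = code G → intdeg G ≤ intdeg G'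

end Codes

section Reduction

variable {R F : Type*} [CommRing R] [Field F] {φ : R →+* F} {k n : ℕ}

theorem fullRowRank_iff_exists_map_minorOn_ne_zero (hφ : Function.Surjective φ)
    (hker : RingHom.ker φ ≤ nilradical R) {G : Matrix (Fin k) (Fin n) R[X]} :
    FullRowRank G ↔ ∃ c, (minorOn G c).map φ ≠ 0 :=
  exists_congr fun _ => mem_nonZeroDivisors_iff_map_ne_zero hφ hker

theorem FullRowRank.code_eq_of_row_mem_code (hφ : Function.Surjective φ)
    (hker : RingHom.ker φ ≤ nilradical R) {G G' : Matrix (Fin k) (Fin n) R[X]}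
    (hG' : FullRowRank G') (hrows : ∀ i, polyToLS R ∘ G' i ∈ code G) : code G' = code G := by
  obtain ⟨T, hT⟩ := exists_map_eq_mul_of_row_mem_code hrows
  obtain ⟨c, hc⟩ := (fullRowRank_iff_exists_map_minorOn_ne_zero hφ hker).1 hG'
  have hdet : IsUnit T.det := by
    have hminor := isUnit_polyToLS_of_map_ne_zero hφ hker hc
    rw [← minorOn_map, hT, minorOn_mul] at hminor
    exact isUnit_of_mul_isUnit_left hminor
  ext v
  constructor
  · rintro ⟨u, rfl⟩
    exact ⟨u ᵥ* T, by rw [hT, vecMul_vecMul]⟩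
  · rintro ⟨u, rfl⟩
    exact ⟨u ᵥ* T⁻¹, by rw [hT, vecMul_vecMul, nonsing_inv_mul_cancel_left _ _ hdet]⟩

-- If `a i` were nonzero modulo `ker φ`, putting `v` in place of row `i` would scale the minors
-- by `a i / g`, hence produce another generator matrix, of smaller internal degree.
theorem IsRIDM.map_eq_zero_of_monic_smul_eq_vecMul (hφ : Function.Surjective φ)
    (hker : RingHom.ker φ ≤ nilradical R) {G : Matrix (Fin k) (Fin n) R[X]} (hG : IsRIDM G)
    {v : Fin n → R[X]} (hv : polyToLS R ∘ v ∈ code G) {g : R[X]} (hg : g.Monic)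
    {a : Fin k → R[X]} (hga : g • v = a ᵥ* G) (ha : ∀ i, (a i).degree < g.degree) (i : Fin k) :
    (a i).map φ = 0 := by
  by_contra hai
  obtain ⟨c, hc⟩ := (fullRowRank_iff_exists_map_minorOn_ne_zero hφ hker).1 hG.1
  have hminor (d : Fin k → Fin n) : g * minorOn (G.updateRow i v) d = a i * minorOn G d := by
    rw [← minorOn_updateRow_smul, hga, minorOn_updateRow_vecMul]
  have hrank : FullRowRank (G.updateRow i v) := by
    refine (fullRowRank_iff_exists_map_minorOn_ne_zero hφ hker).2
      ⟨c, fun h0 => mul_ne_zero hai hc ?_⟩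
    rw [← Polynomial.map_mul, ← hminor, Polynomial.map_mul, h0, mul_zero]
  have hrows (l : Fin k) : polyToLS R ∘ G.updateRow i v l ∈ code G := by
    obtain rfl | hl := eq_or_ne l i
    · rwa [updateRow_self]
    · rw [updateRow_ne hl]
      exact row_mem_code G l
  have hpos : ⊥ < intdeg G := by
    refine (bot_lt_iff_ne_bot.2 fun h0 => hc ?_).trans_le (degree_minorOn_le_intdeg G c)
    rw [degree_eq_bot.1 h0, Polynomial.map_zero]
  have hlt : intdeg (G.updateRow i v) < intdeg G := (Finset.sup_lt_iff hpos).2 fun d _ =>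
    degree_lt_of_monic_mul_eq hg (ha i) (hminor d) (degree_minorOn_le_intdeg G d) hpos
  exact hlt.not_ge (hG.2 _ hrank (hrank.code_eq_of_row_mem_code hφ hker hrows))

theorem FullRowRank.exists_monic_smul_eq_vecMul (hφ : Function.Surjective φ)
    (hker : RingHom.ker φ ≤ nilradical R) {G : Matrix (Fin k) (Fin n) R[X]} (hG : FullRowRank G)
    {v : Fin n → R[X]} (hv : polyToLS R ∘ v ∈ code G) :
    ∃ (g : R[X]) (a : Fin k → R[X]), g.Monic ∧ g • v = a ᵥ* G := by
  obtain ⟨c, hc⟩ := (fullRowRank_iff_exists_map_minorOn_ne_zero hφ hker).1 hG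
  obtain ⟨g, hg, s, hs⟩ := exists_monic_dvd_of_map_ne_zero hφ hker hc
  obtain ⟨u, hu⟩ := hv
  obtain ⟨a, ha⟩ := exists_minorOn_smul_eq_vecMul polyToLS_injective G c hu
  exact ⟨g, s • a, hg, by rw [hs, mul_comm, mul_smul, ha, smul_vecMul]⟩

theorem IsRIDM.exists_map_eq_vecMul (hφ : Function.Surjective φ)
    (hker : RingHom.ker φ ≤ nilradical R) {G : Matrix (Fin k) (Fin n) R[X]} (hG : IsRIDM G)
    {v : Fin n → R[X]} (hv : polyToLS R ∘ v ∈ code G) :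
    ∃ e : Fin k → F[X], mapRingHom φ ∘ v = e ᵥ* G.map (mapRingHom φ) := by
  obtain ⟨g, a, hg, hga⟩ := hG.1.exists_monic_smul_eq_vecMul hφ hker hv
  set q : Fin k → R[X] := fun i => a i /ₘ g
  set r : Fin k → R[X] := fun i => a i %ₘ g
  set w : Fin n → R[X] := v - q ᵥ* G
  have hgw : g • w = r ᵥ* G := smul_sub_divByMonic_vecMul hga
  have := φ.domain_nontrivial
  have hr : mapRingHom φ ∘ r = 0 := _root_.funext <|
    hG.map_eq_zero_of_monic_smul_eq_vecMul hφ hker (sub_vecMul_mem_code hv q) hg hgw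
      fun i => degree_modByMonic_lt (a i) hg
  have hw (j : Fin n) : mapRingHom φ (w j) = 0 := by
    have hgwj : mapRingHom φ g * mapRingHom φ (w j) = 0 := by
      rw [← map_mul, ← smul_eq_mul, ← Pi.smul_apply, hgw, RingHom.map_vecMul, hr, zero_vecMul,
        Pi.zero_apply]
    exact (mul_eq_zero.1 hgwj).resolve_left (hg.map φ).ne_zero
  refine ⟨mapRingHom φ ∘ q, _root_.funext fun j => ?_⟩
  rw [← RingHom.map_vecMul, Function.comp_apply, ← sub_eq_zero, ← map_sub]
  exact hw j

theorem IsRIDM.exists_map_eq_mul (hφ : Function.Surjective φ)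
    (hker : RingHom.ker φ ≤ nilradical R) {G₁ G₂ : Matrix (Fin k) (Fin n) R[X]} (hG₁ : IsRIDM G₁)
    (hrows : ∀ i, polyToLS R ∘ G₂ i ∈ code G₁) :
    ∃ E : Matrix (Fin k) (Fin k) F[X], G₂.map (mapRingHom φ) = E * G₁.map (mapRingHom φ) := by
  choose E hE using fun i => hG₁.exists_map_eq_vecMul hφ hker (hrows i)
  exact ⟨of E, Matrix.ext fun i j => congrFun (hE i) j⟩

theorem IsRIDM.gcd_minorOn_map_dvd [NormalizedGCDMonoid F[X]] (hφ : Function.Surjective φ)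
    (hker : RingHom.ker φ ≤ nilradical R) {G₁ G₂ : Matrix (Fin k) (Fin n) R[X]} (hG₁ : IsRIDM G₁)
    (hspan : code G₁ = code G₂) :
    Finset.univ.gcd (minorOn (G₁.map (mapRingHom φ))) ∣
      Finset.univ.gcd (minorOn (G₂.map (mapRingHom φ))) := by
  obtain ⟨E, hE⟩ := hG₁.exists_map_eq_mul hφ hker fun i => hspan ▸ row_mem_code G₂ i
  rw [hE]
  exact gcd_minorOn_dvd_gcd_minorOn_mul E _

theorem residual_structural_polynomial_invariant_general [NormalizedGCDMonoid F[X]]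
    (hφ : Function.Surjective φ) (hker : RingHom.ker φ ≤ nilradical R)
    {G₁ G₂ : Matrix (Fin k) (Fin n) R[X]}
    (h₁ : IsRIDM G₁) (h₂ : IsRIDM G₂) (hspan : code G₁ = code G₂) :
    Finset.univ.gcd (minorOn (G₁.map (mapRingHom φ))) =
      Finset.univ.gcd (minorOn (G₂.map (mapRingHom φ))) :=
  dvd_antisymm_of_normalize_eq Finset.normalize_gcd Finset.normalize_gcd
    (h₁.gcd_minorOn_map_dvd hφ hker hspan) (h₂.gcd_minorOn_map_dvd hφ hker hspan.symm)

end Reduction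

theorem ker_castHom_pow_le_nilradical (m r : ℕ) (hr : r ≠ 0) :
    RingHom.ker (ZMod.castHom (dvd_pow_self m hr) (ZMod m)) ≤ nilradical (ZMod (m ^ r)) := by
  intro a ha
  obtain ⟨z, rfl⟩ := ZMod.intCast_surjective a
  rw [RingHom.mem_ker, map_intCast, ZMod.intCast_zmod_eq_zero_iff_dvd] at ha
  refine mem_nilradical.2 ⟨r, ?_⟩
  rw [← Int.cast_pow, ZMod.intCast_zmod_eq_zero_iff_dvd, Nat.cast_pow]
  exact pow_dvd_pow_of_dvd ha r

/-- The Residual Structural Polynomial is independent of the choice of RIDM: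
two equivalent reduced internal degree matrices have the same monic GCD of the
maximal minors of their reductions modulo `p`. -/
theorem residual_structural_polynomial_invariant
    (p : ℕ) [Fact p.Prime] (r : ℕ) (hr : r ≠ 0) (k n : ℕ)
    (G₁ G₂ : Matrix (Fin k) (Fin n) (Polynomial (ZMod (p ^ r))))
    (h₁ : FullRowRank G₁) (h₂ : FullRowRank G₂)
    (hspan : code G₁ = code G₂)
    (hmin₁ : ∀ G' : Matrix (Fin k) (Fin n) (Polynomial (ZMod (p ^ r))),
      FullRowRank G' → code G' = code G₁ → intdeg G₁ ≤ intdeg G')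
    (hmin₂ : ∀ G' : Matrix (Fin k) (Fin n) (Polynomial (ZMod (p ^ r))),
      FullRowRank G' → code G' = code G₂ → intdeg G₂ ≤ intdeg G') :
    gcdMinors (reduceMod p r hr G₁) = gcdMinors (reduceMod p r hr G₂) :=
  residual_structural_polynomial_invariant_general (ZMod.castHom_surjective _)
    (ker_castHom_pow_le_nilradical p r hr) ⟨h₁, hmin₁⟩ ⟨h₂, hmin₂⟩ hspan
end

section
/- Let K be a field, and let G be a k × n matrix and H an (n−k) × n matrix over K, both of full row rank, satisfying G·Hᵀ = 0. Then there exists a nonzero scalar c ∈ K such that for every subset S of the column indices with |S| = k, the k × k minor of G on the columns S equals (−1)^{σ(S)} · c times the (n−k) × (n−k) minor of H on the complementary columns, where σ(S) denotes the sum of the indices in S. -/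
open Polynomial Matrix

/-!
Take right inverses `A` of `G` and `B` of `H`, and stack `G` on `Bᵀ` to a square matrix `M`. Since
`G * Hᵀ = 0` and `Bᵀ * Hᵀ = 1`, multiplying `M` by `[X | Hᵀ]` gives a block triangular matrix with
diagonal blocks `G * X` and `1`, for every `X`. With `X = A` this shows that `det M` is a unit. If
instead `X` consists of the standard basis vectors indexed by `S`, then `G * X` is the submatrix of
`G` on `S`, while `[X | Hᵀ]`, with its rows in `S` moved to the front, is block triangular with
diagonal blocks `1` and the transpose of the submatrix of `H` on `Sᶜ`. So the two minors differ by
`det M` and the sign of the shuffle that moves `S` to the front.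
-/

section Shuffle

variable {k m : ℕ}

theorem sign_finSumFinEquiv_symm_trans {e : Fin k ⊕ Fin m ≃ Fin (k + m)}
    (hl : StrictMono (e ∘ Sum.inl)) (hr : StrictMono (e ∘ Sum.inr)) :
    Equiv.Perm.sign (finSumFinEquiv.symm.trans e) =
      ∏ a : Fin k, (-1) ^ Finset.card {b : Fin m | e (Sum.inr b) < e (Sum.inl a)} := by
  have lt_inl (a a' : Fin k) : e (Sum.inl a) < e (Sum.inl a') ↔ a < a' := hl.lt_iff_lt
  have lt_inr (b b' : Fin m) : e (Sum.inr b) < e (Sum.inr b') ↔ b < b' := hr.lt_iff_lt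
  have inl_lt_inr (a : Fin k) (b : Fin m) :
      e (Sum.inl a) < e (Sum.inr b) ↔ ¬ e (Sum.inr b) < e (Sum.inl a) := by
    rw [not_lt, le_iff_lt_or_eq, or_iff_left (e.injective.ne Sum.inl_ne_inr)]
  -- Pairs within one block keep their order, so only mixed pairs can be inversions.
  have no_inversion_within_block (p : Prop) [Decidable p] :
      (if p then (if p then (1 : ℤˣ) else -1) else 1) = 1 := by
    split_ifs <;> rfl
  have castAdd_lt_castAdd (a a' : Fin k) : a.castAdd m < a'.castAdd m ↔ a < a' :=
    (Fin.strictMono_castAdd m).lt_iff_lt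
  have castAdd_lt_natAdd (a : Fin k) (b : Fin m) : a.castAdd m < b.natAdd k :=
    a.isLt.trans_le (Nat.le_add_right k b)
  simp only [Equiv.Perm.sign_eq_prod_prod_Ioi, ← Finset.filter_lt_eq_Ioi, Finset.prod_filter,
    Fin.prod_univ_add, Equiv.trans_apply, finSumFinEquiv_symm_apply_castAdd,
    finSumFinEquiv_symm_apply_natAdd, castAdd_lt_castAdd, Fin.natAdd_lt_natAdd_iff,
    castAdd_lt_natAdd, (castAdd_lt_natAdd _ _).not_gt, lt_inl, lt_inr,
    no_inversion_within_block, if_true, if_false, Finset.prod_const_one, one_mul, mul_one]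
  simp only [inl_lt_inr, ite_not, Finset.prod_ite, Finset.prod_const, one_pow, mul_one]

theorem val_inl_eq_add_card_of_strictMono {κ : Type*} [Fintype κ] {n : ℕ} {e : Fin k ⊕ κ ≃ Fin n}
    (hl : StrictMono (e ∘ Sum.inl)) (a : Fin k) :
    (e (Sum.inl a) : ℕ) = a + Finset.card {b : κ | e (Sum.inr b) < e (Sum.inl a)} := by
  have lt_inl (a' : Fin k) : e (Sum.inl a') < e (Sum.inl a) ↔ a' < a := hl.lt_iff_lt
  calc (e (Sum.inl a) : ℕ)
    _ = Finset.card {t : Fin n | t < e (Sum.inl a)} := by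
      rw [Finset.filter_gt_eq_Iio, Fin.card_Iio]
    _ = Finset.card {a' : Fin k | a' < a} +
          Finset.card {b : κ | e (Sum.inr b) < e (Sum.inl a)} := by
      simp only [Finset.card_filter, ← e.sum_comp, Fintype.sum_sum_type, lt_inl]
    _ = a + Finset.card {b : κ | e (Sum.inr b) < e (Sum.inl a)} := by
      rw [Finset.filter_gt_eq_Iio, Fin.card_Iio]

theorem sign_finSumFinEquiv_symm_trans_finSumEquivOfFinset (S : Finset (Fin (k + m)))
    (hS : S.card = k) (hSc : Sᶜ.card = m) :
    Equiv.Perm.sign (finSumFinEquiv.symm.trans (finSumEquivOfFinset hS hSc)) =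
      (-1) ^ (∑ i ∈ S, (i : ℕ)) * (-1) ^ (∑ a : Fin k, (a : ℕ)) := by
  let e := finSumEquivOfFinset hS hSc
  have hl : StrictMono (e ∘ Sum.inl) := (S.orderEmbOfFin hS).strictMono
  have hr : StrictMono (e ∘ Sum.inr) := (Sᶜ.orderEmbOfFin hSc).strictMono
  have hsum : ∑ i ∈ S, (i : ℕ) = ∑ a, (e (Sum.inl a) : ℕ) := by
    conv_lhs => rw [← S.map_orderEmbOfFin_univ hS, Finset.sum_map]
    rfl
  rw [hsum, sign_finSumFinEquiv_symm_trans hl hr, Finset.prod_pow_eq_pow_sum]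
  simp only [val_inl_eq_add_card_of_strictMono hl, Finset.sum_add_distrib]
  rw [pow_add, mul_right_comm, ← mul_pow, neg_one_mul, neg_neg, one_pow, one_mul]

end Shuffle

section Minors

variable {R ι κ ν : Type*} [CommRing R] [Fintype ι] [Fintype κ] [Fintype ν]
  [DecidableEq ι] [DecidableEq κ]

theorem det_submatrix_eq_sign_mul [DecidableEq ν] (e₀ e : ι ≃ ν) (M : Matrix ι ν R) :
    (M.submatrix id e).det =
      Equiv.Perm.sign (e₀.symm.trans e) * (M.submatrix id e₀).det := by
  rw [← det_submatrix_equiv_self e₀.symm (M.submatrix id e),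
    ← det_submatrix_equiv_self e₀.symm (M.submatrix id e₀), ← det_permute']
  simp only [submatrix_submatrix, Function.comp_def, id, Equiv.trans_apply, Equiv.apply_symm_apply]

theorem det_submatrix_fromRows_mul_det_submatrix_fromCols (e : ι ⊕ κ ≃ ν) {G : Matrix ι ν R}
    (C : Matrix κ ν R) (A : Matrix ν ι R) {D : Matrix ν κ R} (hGD : G * D = 0) :
    ((fromRows G C).submatrix id e).det * ((fromCols A D).submatrix e id).det =
      (G * A).det * (C * D).det := by
  rw [← det_mul, submatrix_mul_equiv, fromRows_mul_fromCols, hGD, submatrix_id_id,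
    det_fromBlocks_zero₁₂]

theorem isUnit_det_submatrix_fromRows (e : ι ⊕ κ ≃ ν) {G : Matrix ι ν R} {C : Matrix κ ν R}
    {A : Matrix ν ι R} {D : Matrix ν κ R} (hGA : G * A = 1) (hCD : C * D = 1) (hGD : G * D = 0) :
    IsUnit ((fromRows G C).submatrix id e).det :=
  .of_mul_eq_one _ <| by
    rw [det_submatrix_fromRows_mul_det_submatrix_fromCols e C A hGD, hGA, hCD, det_one, det_one,
      one_mul]

theorem det_submatrix_inl_eq_det_mul_det_submatrix_inr (e : ι ⊕ κ ≃ ν) {G : Matrix ι ν R}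
    {C : Matrix κ ν R} {D : Matrix ν κ R} (hCD : C * D = 1) (hGD : G * D = 0) :
    (G.submatrix id (e ∘ Sum.inl)).det =
      ((fromRows G C).submatrix id e).det * (D.submatrix (e ∘ Sum.inr) id).det := by
  classical
  let A : Matrix ν ι R := (1 : Matrix ν ν R).submatrix id (e ∘ Sum.inl)
  have hGA : G * A = G.submatrix id (e ∘ Sum.inl) := by
    simpa only [submatrix_id_id, Matrix.mul_one] using
      (submatrix_mul G (1 : Matrix ν ν R) id id (e ∘ Sum.inl) Function.bijective_id).symm
  have hblocks : (fromCols A D).submatrix e id =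
      fromBlocks 1 (D.submatrix (e ∘ Sum.inl) id) 0 (D.submatrix (e ∘ Sum.inr) id) := by
    ext (i | i) (j | j) <;> simp [A, one_apply]
  have hdet := det_submatrix_fromRows_mul_det_submatrix_fromCols e C A hGD
  rw [hblocks, det_fromBlocks_zero₂₁, det_one, one_mul, hGA, hCD, det_one, mul_one] at hdet
  exact hdet.symm

end Minors

theorem exists_right_inverse_of_linearIndependent {K ι ν : Type*} [DivisionRing K] [Finite ι]
    [DecidableEq ι] [Fintype ν] {G : Matrix ι ν K} (hG : LinearIndependent K G) :
    ∃ A : Matrix ν ι K, G * A = 1 := by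
  classical
  cases nonempty_fintype ι
  obtain ⟨f, hf⟩ := G.toLinearMapRight'.exists_leftInverse_of_injective
    (LinearMap.ker_eq_bot.2 (vecMul_injective_iff.2 hG))
  refine ⟨LinearMap.toMatrixRight' f, toLinearMapRight'.injective ?_⟩
  rw [toLinearMapRight'_mul, toLinearMapRight'_one, ← hf]
  simp

theorem complementary_minors_of_orthogonal_general {R : Type*} [CommRing R] {k m n : ℕ}
    (hn : k + m = n) {G : Matrix (Fin k) (Fin n) R} {H : Matrix (Fin m) (Fin n) R}
    (hG : ∃ A : Matrix (Fin n) (Fin k) R, G * A = 1)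
    (hH : ∃ B : Matrix (Fin n) (Fin m) R, H * B = 1) (hGH : G * Hᵀ = 0) :
    ∃ c : R, IsUnit c ∧ ∀ (S : Finset (Fin n)) (hS : S.card = k) (hSc : Sᶜ.card = m),
      (G.submatrix id (S.orderEmbOfFin hS)).det
        = (-1) ^ (∑ i ∈ S, (i : ℕ)) * c * (H.submatrix id (Sᶜ.orderEmbOfFin hSc)).det := by
  subst hn
  obtain ⟨A, hGA⟩ := hG
  obtain ⟨B, hHB⟩ := hH
  have hBH : Bᵀ * Hᵀ = 1 := by rw [← transpose_mul, hHB, transpose_one]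
  let M := fromRows G Bᵀ
  refine ⟨(-1) ^ (∑ a : Fin k, (a : ℕ)) * (M.submatrix id finSumFinEquiv).det,
    (isUnit_neg_one.pow _).mul (isUnit_det_submatrix_fromRows _ hGA hBH hGH), fun S hS hSc => ?_⟩
  let e := finSumEquivOfFinset hS hSc
  have hl : e ∘ Sum.inl = S.orderEmbOfFin hS := funext (finSumEquivOfFinset_inl hS hSc)
  have hr : e ∘ Sum.inr = Sᶜ.orderEmbOfFin hSc := funext (finSumEquivOfFinset_inr hS hSc)
  have hsign : (M.submatrix id e).det = (-1) ^ (∑ i ∈ S, (i : ℕ)) *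
      ((-1) ^ (∑ a : Fin k, (a : ℕ)) * (M.submatrix id finSumFinEquiv).det) := by
    rw [det_submatrix_eq_sign_mul finSumFinEquiv e,
      sign_finSumFinEquiv_symm_trans_finSumEquivOfFinset]
    push_cast
    rw [mul_assoc]
  rw [← hl, ← hr, ← hsign, det_submatrix_inl_eq_det_mul_det_submatrix_inr e hBH hGH,
    ← transpose_submatrix, det_transpose]

/-- Minors of orthogonal full-row-rank matrices over a field: if `G·Hᵀ = 0` then each
`k × k` minor of `G` equals, up to a fixed nonzero scalar and the sign `(-1)^{σ(S)}`,
the complementary `(n-k) × (n-k)` minor of `H`. -/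
theorem complementary_minors_of_orthogonal
    {K : Type*} [Field K] (k n : ℕ) (hk : k ≤ n)
    (G : Matrix (Fin k) (Fin n) K) (H : Matrix (Fin (n - k)) (Fin n) K)
    (hG : LinearIndependent K G) (hH : LinearIndependent K H)
    (hGH : G * H.transpose = 0) :
    ∃ c : K, c ≠ 0 ∧ ∀ (S : Finset (Fin n)) (hS : S.card = k),
      (G.submatrix id (S.orderEmbOfFin hS)).det
        = (-1) ^ (∑ i ∈ S, (i : ℕ)) * c *
            (H.submatrix id (Sᶜ.orderEmbOfFin
              (by rw [Finset.card_compl, hS, Fintype.card_fin]))).det := by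
  obtain ⟨c, hc, h⟩ := complementary_minors_of_orthogonal_general (Nat.add_sub_of_le hk)
    (exists_right_inverse_of_linearIndependent hG)
    (exists_right_inverse_of_linearIndependent hH) hGH
  exact ⟨c, hc.ne_zero, fun S hS => h S hS _⟩
end

section
/- Let p be a prime, r ≥ 1, and let C be a free convolutional code of length n and rank k over ℤ/p^r with dual code C⊥. Then C is catastrophic (i.e., every full-row-rank polynomial generator matrix of C over (ℤ/p^r)[D] admits an input u of infinite Hamming weight whose output u·G has finite Hamming weight) if and only if C⊥ is catastrophic. -/
open Polynomial Matrix

/-- A code is catastrophic if every full-row-rank polynomial generator matrix of it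
admits an input of infinite Hamming weight whose output has finite Hamming weight. -/
noncomputable def CatastrophicCode {R : Type*} [CommRing R] {n : ℕ}
    (C : Set (Fin n → LaurentSeries R)) : Prop :=
  ∀ (m : ℕ) (G : Matrix (Fin m) (Fin n) (Polynomial R)),
    FullRowRank G → code G = C →
      ∃ u : Fin m → LaurentSeries R,
        ¬ FiniteWeight u ∧ FiniteWeight (Matrix.vecMul u (G.map (polyToLS R)))



/-!
A generator matrix `G` is non-catastrophic when every preimage of a vector of Laurent polynomials
is itself a vector of Laurent polynomials. Let `R` be an Artinian local ring with residue field
`F`. An element `σ` whose annihilator is the maximal ideal identifies Laurent series over `F` with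
the multiples of `σ`, so reduction to `F` preserves non-catastrophicity. Over the principal ideal
ring `F[T;T⁻¹]` a non-catastrophic matrix defines a surjective map of free modules with free
kernel, hence extends to an invertible matrix. Since the kernel of reduction is nilpotent, this
extension lifts to `R[T;T⁻¹]`. The columns of the inverse that belong to the new rows, cleared of
powers of `T`, form a non-catastrophic generator matrix of the dual code. The converse follows
because the code is its own double dual.
-/

namespace ConvolutionalCode

open scoped LaurentPolynomial nonZeroDivisors

section NilKernel

variable {A B : Type*}

theorem exists_zeroHom_rightInverse [Zero A] [Zero B] {F : Type*} [FunLike F A B]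
    [ZeroHomClass F A B] {f : F} (hf : Function.Surjective f) :
    ∃ g : ZeroHom B A, Function.RightInverse g f := by
  classical
  refine ⟨⟨Function.update (Function.surjInv hf) 0 0, Function.update_self ..⟩, fun b => ?_⟩
  by_cases hb : b = 0
  · simp [hb]
  · simp [hb, Function.surjInv_eq hf]

theorem isLocalHom_of_surjective_of_ker_nilpotent [CommRing A] [CommRing B] {f : A →+* B}
    (hf : Function.Surjective f) (hker : ∀ a, f a = 0 → IsNilpotent a) : IsLocalHom f where
  map_nonunit a ha := by
    obtain ⟨b, hb⟩ := ha.exists_right_inv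
    obtain ⟨a', rfl⟩ := hf b
    have hnil : IsNilpotent (a * a' - 1) := hker _ (by simp [hb])
    exact isUnit_of_mul_isUnit_left (by simpa using hnil.isUnit_add_one)

end NilKernel

section LaurentSeriesMap

variable {R S : Type*} [CommRing R] [CommRing S]

/-- Coefficientwise application of a ring homomorphism to a Laurent series, as a ring
homomorphism; it is used to reduce codes modulo the maximal ideal. -/
noncomputable def seriesMap (φ : R →+* S) : LaurentSeries R →+* LaurentSeries S where
  toFun x := x.map φ
  map_zero' := HahnSeries.map_zero (φ : ZeroHom R S)
  map_one' := HahnSeries.map_one φ.toMonoidWithZeroHom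
  map_add' _ _ := HahnSeries.map_add (φ : R →+ S)
  map_mul' _ _ := HahnSeries.map_mul (φ : R →ₙ+* S)

@[simp]
theorem coeff_seriesMap (φ : R →+* S) (x : LaurentSeries R) (n : ℤ) :
    (seriesMap φ x).coeff n = φ (x.coeff n) :=
  rfl

theorem seriesMap_surjective {φ : R →+* S} (hφ : Function.Surjective φ) :
    Function.Surjective (seriesMap φ) := by
  obtain ⟨ψ, hψ⟩ := exists_zeroHom_rightInverse hφ
  refine fun x => ⟨x.map ψ, ?_⟩
  ext n
  exact hψ (x.coeff n)

theorem coeff_mul_mem {I J : Ideal R} {x y : LaurentSeries R} (hx : ∀ n, x.coeff n ∈ I)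
    (hy : ∀ n, y.coeff n ∈ J) (n : ℤ) : (x * y).coeff n ∈ I * J := by
  rw [HahnSeries.coeff_mul]
  exact Ideal.sum_mem _ fun _ _ => Ideal.mul_mem_mul (hx _) (hy _)

theorem coeff_pow_mem {I : Ideal R} {x : LaurentSeries R} (hx : ∀ n, x.coeff n ∈ I) (e : ℕ)
    (n : ℤ) : (x ^ e).coeff n ∈ I ^ e := by
  induction e generalizing n with
  | zero => simp
  | succ e ih => simpa only [pow_succ] using coeff_mul_mem ih hx n

theorem isNilpotent_of_coeff_mem {I : Ideal R} (hI : IsNilpotent I) {x : LaurentSeries R}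
    (hx : ∀ n, x.coeff n ∈ I) : IsNilpotent x := by
  obtain ⟨e, he⟩ := hI
  refine ⟨e, HahnSeries.ext (funext fun n => ?_)⟩
  simpa [he] using coeff_pow_mem hx e n

theorem isNilpotent_of_seriesMap_eq_zero {φ : R →+* S} (hφ : IsNilpotent (RingHom.ker φ))
    {x : LaurentSeries R} (hx : seriesMap φ x = 0) : IsNilpotent x :=
  isNilpotent_of_coeff_mem hφ fun n => by
    rw [RingHom.mem_ker, ← coeff_seriesMap, hx, HahnSeries.coeff_zero]

theorem isLocalHom_seriesMap {φ : R →+* S} (hφ : Function.Surjective φ)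
    (hker : IsNilpotent (RingHom.ker φ)) : IsLocalHom (seriesMap φ) :=
  isLocalHom_of_surjective_of_ker_nilpotent (seriesMap_surjective hφ) fun _ =>
    isNilpotent_of_seriesMap_eq_zero hker

@[simp]
theorem seriesMap_polyToLS (φ : R →+* S) (f : R[X]) :
    seriesMap φ (polyToLS R f) = polyToLS S (f.map φ) := by
  suffices (seriesMap φ).comp (polyToLS R) = (polyToLS S).comp (Polynomial.mapRingHom φ) from
    RingHom.congr_fun this f
  refine Polynomial.ringHom_ext (fun a => HahnSeries.ext (funext fun n => ?_))
    (HahnSeries.ext (funext fun n => ?_))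
  · by_cases hn : n = 0 <;> simp [polyToLS, hn]
  · by_cases hn : n = 1 <;> simp [polyToLS, hn]

end LaurentSeriesMap

section LaurentPolynomialEmbedding

variable {R S : Type*} [CommRing R] [CommRing S]

variable (R) in
/-- The embedding of Laurent polynomials into Laurent series; its image is the ring of series of
finite Hamming weight. -/
noncomputable def laurentToSeries : R[T;T⁻¹] →+* LaurentSeries R :=
  AddMonoidAlgebra.liftNCRingHom HahnSeries.C
    { toFun := fun n => HahnSeries.single n.toAdd 1
      map_one' := rfl
      map_mul' := fun a b => by simp } fun _ _ => .all _ _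

@[simp]
theorem coeff_laurentToSeries (f : R[T;T⁻¹]) (n : ℤ) :
    (laurentToSeries R f).coeff n = f.coeff n := by
  induction f using LaurentPolynomial.induction_on' with
  | add p q hp hq => simp [hp, hq]
  | C_mul_T m a =>
    simp [← LaurentPolynomial.single_eq_C_mul_T, laurentToSeries, HahnSeries.coeff_single,
      Finsupp.single_apply, eq_comm]

theorem laurentToSeries_injective : Function.Injective (laurentToSeries R) := fun f g h =>
  LaurentPolynomial.ext fun n => by simpa using congrArg (HahnSeries.coeff · n) h

theorem support_finite_iff_mem_range {x : LaurentSeries R} :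
    x.support.Finite ↔ x ∈ (laurentToSeries R).range := by
  constructor
  · intro hx
    exact ⟨⟨Finsupp.ofSupportFinite x.coeff hx⟩, HahnSeries.ext (funext (coeff_laurentToSeries _))⟩
  · rintro ⟨f, rfl⟩
    exact f.coeff.support.finite_toSet.subset fun n hn => by simpa using hn

@[simp]
theorem laurentToSeries_toLaurent (f : R[X]) : laurentToSeries R f.toLaurent = polyToLS R f := by
  suffices (laurentToSeries R).comp Polynomial.toLaurent = polyToLS R from
    RingHom.congr_fun this f
  refine Polynomial.ringHom_ext (fun a => HahnSeries.ext (funext fun n => ?_))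
    (HahnSeries.ext (funext fun n => ?_))
  · by_cases hn : n = 0 <;> simp [polyToLS, LaurentPolynomial.C_apply, hn]
  · simp [polyToLS, LaurentPolynomial.T_apply, HahnSeries.coeff_single, eq_comm]

theorem polyToLS_injective : Function.Injective (polyToLS R) := fun f g h =>
  Polynomial.toLaurent_injective (laurentToSeries_injective (by simpa using h))

theorem seriesMap_laurentToSeries (φ : R →+* S) (f : R[T;T⁻¹]) :
    seriesMap φ (laurentToSeries R f) =
      laurentToSeries S (AddMonoidAlgebra.mapRingHom ℤ φ f) := by
  ext n
  simp

theorem mapRingHom_surjective {φ : R →+* S} (hφ : Function.Surjective φ) :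
    Function.Surjective (AddMonoidAlgebra.mapRingHom ℤ φ) :=
  AddMonoidAlgebra.map_surjective (φ : R →+ S) hφ

theorem isLocalHom_mapRingHom {φ : R →+* S} (hφ : Function.Surjective φ)
    (hker : IsNilpotent (RingHom.ker φ)) : IsLocalHom (AddMonoidAlgebra.mapRingHom ℤ φ) := by
  refine isLocalHom_of_surjective_of_ker_nilpotent (mapRingHom_surjective hφ)
    fun f hf => ?_
  rw [← IsNilpotent.map_iff (laurentToSeries_injective (R := R))]
  exact isNilpotent_of_seriesMap_eq_zero hker (by rw [seriesMap_laurentToSeries, hf, map_zero])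

end LaurentPolynomialEmbedding

section ArtinianLocal

open IsLocalRing

variable {R : Type*} [CommRing R] [IsArtinianRing R] [IsLocalRing R]

theorem isNilpotent_ker_residue : IsNilpotent (RingHom.ker (residue R)) := by
  rw [ker_residue, ← jacobson_eq_maximalIdeal ⊥ bot_ne_top]
  exact IsArtinianRing.isNilpotent_jacobson_bot

variable (R) in
theorem exists_mul_eq_zero_iff_residue_eq_zero : ∃ σ : R, ∀ a, σ * a = 0 ↔ residue R a = 0 := by
  -- The maximal ideal is the only prime, so it is the annihilator of some `σ`.
  obtain ⟨P, hP⟩ := associatedPrimes.nonempty R R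
  obtain ⟨hprime, σ, hσ⟩ := isAssociatedPrime_iff.mp hP
  refine ⟨σ, fun a => ?_⟩
  rw [residue_eq_zero_iff, ← eq_maximalIdeal (I := P) inferInstance, hσ,
    Submodule.mem_colon_singleton, Submodule.mem_bot, smul_eq_mul, mul_comm]

theorem isLocalHom_seriesMap_residue : IsLocalHom (seriesMap (residue R)) :=
  isLocalHom_seriesMap residue_surjective isNilpotent_ker_residue

variable (R) in
theorem isLocalRing_laurentSeries : IsLocalRing (LaurentSeries R) :=
  have := isLocalHom_seriesMap_residue (R := R)
  (seriesMap (residue R)).domain_isLocalRing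

theorem mem_nonZeroDivisors_iff_isUnit_polyToLS {f : R[X]} :
    f ∈ R[X]⁰ ↔ IsUnit (polyToLS R f) := by
  have := isLocalHom_seriesMap_residue (R := R)
  refine ⟨fun hf => ?_, fun hf => ?_⟩
  · obtain ⟨σ, hσ⟩ := exists_mul_eq_zero_iff_residue_eq_zero R
    have hσ_ne : σ ≠ 0 := by
      rintro rfl
      simpa using hσ 1
    refine IsUnit.of_map (seriesMap (residue R)) _ (isUnit_iff_ne_zero.mpr fun h0 => hσ_ne ?_)
    rw [seriesMap_polyToLS, map_eq_zero_iff _ polyToLS_injective] at h0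
    have hσf : Polynomial.C σ * f = 0 := by
      ext n
      rw [Polynomial.coeff_C_mul, Polynomial.coeff_zero, hσ, ← Polynomial.coeff_map, h0,
        Polynomial.coeff_zero]
    exact Polynomial.C_eq_zero.mp ((mul_right_mem_nonZeroDivisors_eq_zero_iff hf).mp hσf)
  · exact comap_nonZeroDivisors_le_of_injective polyToLS_injective hf.mem_nonZeroDivisors

end ArtinianLocal

section MaximalMinors

variable {S : Type*} [CommRing S] {k n : ℕ}

theorem det_mul_eq_sum_minorOn (M : Matrix (Fin k) (Fin n) S) (N : Matrix (Fin n) (Fin k) S) :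
    (M * N).det = ∑ c : Fin k → Fin n, (∏ i, N (c i) i) * minorOn M c := by
  have hrows : (M * N)ᵀ = fun i => ∑ j, N j i • Mᵀ j := by
    ext i l
    simp [Matrix.mul_apply, mul_comm]
  calc (M * N).det = detRowAlternating.toMultilinearMap fun i => ∑ j, N j i • Mᵀ j := by
        rw [← det_transpose, hrows]; rfl
    _ = ∑ c : Fin k → Fin n, (∏ i, N (c i) i) * (Mᵀ.submatrix c id).det := by
        rw [MultilinearMap.map_sum]
        exact Finset.sum_congr rfl fun c _ => MultilinearMap.map_smul_univ ..
    _ = _ := by simp only [minorOn, ← transpose_submatrix, det_transpose]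

theorem exists_isUnit_minorOn_iff [IsLocalRing S] {M : Matrix (Fin k) (Fin n) S} :
    (∃ c, IsUnit (minorOn M c)) ↔ ∃ N : Matrix (Fin n) (Fin k) S, M * N = 1 := by
  constructor
  · rintro ⟨c, hc⟩
    refine ⟨(1 : Matrix (Fin n) (Fin n) S).submatrix id c * (M.submatrix id c)⁻¹, ?_⟩
    have hcols : M * (1 : Matrix (Fin n) (Fin n) S).submatrix id c = M.submatrix id c := by
      simpa using (submatrix_mul M 1 id id c Function.bijective_id).symm
    rw [← Matrix.mul_assoc, hcols, Matrix.mul_nonsing_inv _ hc]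
  · rintro ⟨N, hN⟩
    have hsum := det_mul_eq_sum_minorOn M N
    rw [hN, det_one] at hsum
    obtain ⟨c, -, hc⟩ := IsLocalRing.exists_of_isUnit_sum (hsum ▸ isUnit_one)
    exact ⟨c, isUnit_of_mul_isUnit_right hc⟩

theorem fullRowRank_iff_exists_rightInverse {R : Type*} [CommRing R] [IsArtinianRing R]
    [IsLocalRing R] {G : Matrix (Fin k) (Fin n) R[X]} :
    FullRowRank G ↔
      ∃ N : Matrix (Fin n) (Fin k) (LaurentSeries R), G.map (polyToLS R) * N = 1 := by
  have := isLocalRing_laurentSeries R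
  rw [← exists_isUnit_minorOn_iff]
  refine exists_congr fun c => ?_
  rw [mem_nonZeroDivisors_iff_isUnit_polyToLS, minorOn, RingHom.map_det, minorOn]
  rfl

end MaximalMinors

section DualCode

variable {R : Type*} [CommRing R] {k n : ℕ} {G : Matrix (Fin k) (Fin n) R[X]}

theorem mem_dualCode_code {v : Fin n → LaurentSeries R} :
    v ∈ dualCode (code G) ↔ G.map (polyToLS R) *ᵥ v = 0 := by
  have hinner (u : Fin k → LaurentSeries R) :
      ∑ i, v i * (u ᵥ* G.map (polyToLS R)) i = u ⬝ᵥ (G.map (polyToLS R) *ᵥ v) := by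
    rw [dotProduct_mulVec, dotProduct_comm]; rfl
  calc v ∈ dualCode (code G) ↔ ∀ u, u ⬝ᵥ (G.map (polyToLS R) *ᵥ v) = 0 := by
        simp only [← hinner]
        exact ⟨fun h u => h _ ⟨u, rfl⟩, fun h w ⟨u, hu⟩ => hu ▸ h u⟩
    _ ↔ G.map (polyToLS R) *ᵥ v = 0 := by
        simp only [dotProduct_comm _ (G.map _ *ᵥ v), dotProduct_eq_zero_iff]

theorem dualCode_dualCode_code {N : Matrix (Fin n) (Fin k) (LaurentSeries R)}
    (hN : G.map (polyToLS R) * N = 1) : dualCode (dualCode (code G)) = code G := by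
  refine Set.Subset.antisymm (fun z hz => ?_) fun z hz v hv => ?_
  · set P := 1 - N * G.map (polyToLS R) with hP
    have hGP : G.map (polyToLS R) * P = 0 := by
      rw [hP, Matrix.mul_sub, Matrix.mul_one, ← Matrix.mul_assoc, hN, Matrix.one_mul, sub_self]
    have hzP : z ᵥ* P = 0 := funext fun j => hz (P.col j) <| mem_dualCode_code.mpr <|
      funext fun i => congrFun₂ hGP i j
    refine ⟨z ᵥ* N, ?_⟩
    rw [vecMul_vecMul, ← sub_eq_zero, ← hzP, hP, vecMul_sub, vecMul_one]
  · simpa only [mul_comm] using hv z hz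

end DualCode

section FiniteWeight

variable {R S : Type*} [CommRing R] [CommRing S] {k n : ℕ}

theorem finiteWeight_iff_exists_laurentToSeries {v : Fin n → LaurentSeries R} :
    FiniteWeight v ↔ ∃ f : Fin n → R[T;T⁻¹], laurentToSeries R ∘ f = v := by
  simp only [FiniteWeight, support_finite_iff_mem_range, RingHom.mem_range, Classical.skolem,
    funext_iff, Function.comp_apply]

@[simp]
theorem map_toLaurent_map_laurentToSeries (G : Matrix (Fin k) (Fin n) R[X]) :
    (G.map Polynomial.toLaurent).map (laurentToSeries R) = G.map (polyToLS R) := by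
  ext1
  simp

theorem map_polyToLS_mul_eq_one {G : Matrix (Fin k) (Fin n) R[X]}
    {N : Matrix (Fin n) (Fin k) R[T;T⁻¹]} (hN : G.map Polynomial.toLaurent * N = 1) :
    G.map (polyToLS R) * N.map (laurentToSeries R) = 1 := by
  rw [← map_toLaurent_map_laurentToSeries, ← Matrix.map_mul, hN,
    Matrix.map_one _ (map_zero _) (map_one _)]

theorem nonCatastrophic_of_rightInverse {G : Matrix (Fin k) (Fin n) R[X]}
    {N : Matrix (Fin n) (Fin k) R[T;T⁻¹]} (hN : G.map Polynomial.toLaurent * N = 1) :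
    NonCatastrophic G := by
  intro u hu
  obtain ⟨f, hf⟩ := finiteWeight_iff_exists_laurentToSeries.mp hu
  refine finiteWeight_iff_exists_laurentToSeries.mpr ⟨f ᵥ* N, ?_⟩
  calc laurentToSeries R ∘ (f ᵥ* N) = (laurentToSeries R ∘ f) ᵥ* N.map (laurentToSeries R) :=
        funext fun i => RingHom.map_vecMul ..
    _ = u := by rw [hf, vecMul_vecMul, map_polyToLS_mul_eq_one hN, vecMul_one]

theorem support_C_mul_eq_support_seriesMap {φ : R →+* S} {σ : R} (hσ : ∀ a, σ * a = 0 ↔ φ a = 0)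
    (x : LaurentSeries R) : (HahnSeries.C σ * x).support = (seriesMap φ x).support := by
  ext n
  simp [hσ]

theorem finiteWeight_C_smul_iff {φ : R →+* S} {σ : R} (hσ : ∀ a, σ * a = 0 ↔ φ a = 0)
    {v : Fin n → LaurentSeries R} :
    FiniteWeight ((HahnSeries.C σ : LaurentSeries R) • v) ↔ FiniteWeight (seriesMap φ ∘ v) :=
  forall_congr' fun i => by
    rw [Pi.smul_apply, smul_eq_mul, support_C_mul_eq_support_seriesMap hσ, Function.comp_apply]

theorem nonCatastrophic_map {φ : R →+* S} (hφ : Function.Surjective φ) {σ : R}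
    (hσ : ∀ a, σ * a = 0 ↔ φ a = 0) {G : Matrix (Fin k) (Fin n) R[X]} (hG : NonCatastrophic G) :
    NonCatastrophic (G.map (Polynomial.map φ)) := by
  intro u hu
  obtain ⟨u, rfl⟩ := (seriesMap_surjective hφ).comp_left u
  -- Test `G` on `σ • u`, whose weight is that of the reduction of `u`.
  refine (finiteWeight_C_smul_iff hσ).mp (hG _ ?_)
  rw [smul_vecMul, finiteWeight_C_smul_iff hσ]
  convert hu using 1
  ext1 j
  simp only [Function.comp_apply, RingHom.map_vecMul, Matrix.map_map]
  congr! 3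
  ext1
  simp

end FiniteWeight

section PrincipalIdealRing

theorem exists_linearMap_mem_maximal_of_ne_top {A V : Type*} [CommRing A] [AddCommGroup V]
    [Module A V] [Module.Finite A V] [Module.Projective A V] {N : Submodule A V} (hN : N ≠ ⊤) :
    ∃ (I : Ideal A) (w : V →ₗ[A] A), I.IsMaximal ∧ (∀ x ∈ N, w x ∈ I) ∧ ∃ x, w x ∉ I := by
  obtain ⟨P, hP, hNP⟩ := (eq_top_or_exists_le_coatom N).resolve_left hN
  obtain ⟨I, hI, ⟨e⟩⟩ := isSimpleModule_iff_quot_maximal.mp (isSimpleModule_iff_isCoatom.mpr hP)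
  obtain ⟨w, hw⟩ := Module.projective_lifting_property I.mkQ (e.toLinearMap ∘ₗ P.mkQ)
    I.mkQ_surjective
  have hmem (x : V) : w x ∈ I ↔ x ∈ P := by
    rw [← Submodule.Quotient.mk_eq_zero, ← Submodule.mkQ_apply, ← LinearMap.comp_apply, hw]
    simp
  obtain ⟨x, -, hx⟩ := SetLike.exists_of_lt hP.lt_top
  exact ⟨I, w, hI, fun x hx => (hmem x).mpr (hNP hx), x, mt (hmem x).mp hx⟩

theorem exists_vecMul_mem_maximal_of_not_surjective {A κ ν : Type*} [CommRing A] [Fintype κ]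
    [Fintype ν] {M : Matrix κ ν A} (hM : ¬ Function.Surjective M.mulVecLin) :
    ∃ (I : Ideal A) (w : κ → A), I.IsMaximal ∧ (∀ j, (w ᵥ* M) j ∈ I) ∧ ∃ i, w i ∉ I := by
  classical
  obtain ⟨I, f, hI, hf, x, hx⟩ :=
    exists_linearMap_mem_maximal_of_ne_top (mt LinearMap.range_eq_top.mp hM)
  obtain ⟨w, rfl⟩ := (dotProductEquiv A κ).surjective f
  refine ⟨I, w, hI, fun j => ?_, ?_⟩
  · change w ⬝ᵥ M.col j ∈ I
    simpa using hf _ ⟨Pi.single j 1, rfl⟩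
  · by_contra! hw
    exact hx (I.sum_mem fun i _ => I.mul_mem_right _ (hw i))

theorem mulVecLin_surjective_of_forall_mem_range {A K κ ν : Type*} [CommRing A]
    [IsPrincipalIdealRing A] [Field K] [Fintype κ] [Fintype ν] {ι : A →+* K}
    (hι : Function.Injective ι) (hA : ¬ IsField A) {M : Matrix κ ν A}
    (hM : ∀ u : κ → K, (∀ j, (u ᵥ* M.map ι) j ∈ ι.range) → ∀ i, u i ∈ ι.range) :
    Function.Surjective M.mulVecLin := by
  have := hι.isDomain
  by_contra hsurj
  -- A row `w` with `w M ≡ 0` and `w ≢ 0` modulo a prime `q` makes `w / q` violate `hM`.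
  obtain ⟨I, w, hI, hwM, i, hi⟩ := exists_vecMul_mem_maximal_of_not_surjective hsurj
  obtain ⟨q, rfl⟩ := IsPrincipalIdealRing.principal I
  have hq : ι q ≠ 0 := by
    rw [map_ne_zero_iff _ hι]
    rintro rfl
    exact Ring.ne_bot_of_isMaximal_of_not_isField hI hA (by simp)
  obtain ⟨a, ha⟩ := hM ((ι q)⁻¹ • ι ∘ w) (fun j => by
    obtain ⟨b, hb⟩ := Ideal.mem_span_singleton.mp (hwM j)
    refine ⟨b, ?_⟩
    rw [smul_vecMul, Pi.smul_apply, ← RingHom.map_vecMul, hb, map_mul, smul_eq_mul,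
      inv_mul_cancel_left₀ hq]) i
  have hwi : w i = q * a := hι (by
    rw [map_mul, ha, Pi.smul_apply, smul_eq_mul, mul_inv_cancel_left₀ hq, Function.comp_apply])
  exact hi (Ideal.mem_span_singleton.mpr ⟨a, hwi⟩)

theorem isPrincipalIdealRing_of_isLocalization {A B : Type*} [CommRing A] [CommRing B] [Algebra A B]
    [IsPrincipalIdealRing A] (S : Submonoid A) [IsLocalization S B] : IsPrincipalIdealRing B where
  principal J := by
    obtain ⟨g, hg⟩ := IsPrincipalIdealRing.principal (J.under A)
    rw [← IsLocalization.map_under S B J, hg, ← Ideal.span, Ideal.map_span, Set.image_singleton]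
    exact ⟨_, rfl⟩

instance isPrincipalIdealRing_laurentPolynomial (F : Type*) [Field F] :
    IsPrincipalIdealRing F[T;T⁻¹] :=
  isPrincipalIdealRing_of_isLocalization (Submonoid.powers (X : F[X]))

theorem not_isField_laurentPolynomial (R : Type*) [CommRing R] [Nontrivial R] :
    ¬ IsField R[T;T⁻¹] := by
  intro hfield
  have hT : (LaurentPolynomial.T 1 - 1 : R[T;T⁻¹]) ≠ 0 := fun h => by
    simpa [LaurentPolynomial.T_apply, ← LaurentPolynomial.T_zero] using congrArg (·.coeff 1) h
  obtain ⟨f, hf⟩ := hfield.mul_inv_cancel hT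
  simpa using congrArg (LaurentPolynomial.eval₂ (RingHom.id R) 1) hf

end PrincipalIdealRing

section UnimodularCompletion

variable {A B : Type*} [CommRing A] [CommRing B] {k n : ℕ}

/-- A matrix has a unimodular completion if rows can be appended to it so that the result is
invertible. This is how a parity-check matrix of a code is found: it is read off the inverse. The
completed matrix is not required to be square, so that no relation between `k`, `m` and `n` has to
be known. -/
def HasUnimodularCompletion (M : Matrix (Fin k) (Fin n) A) : Prop :=
  ∃ (m : ℕ) (M' : Matrix (Fin m) (Fin n) A) (V : Matrix (Fin n) (Fin k ⊕ Fin m) A),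
    fromRows M M' * V = 1 ∧ V * fromRows M M' = 1

theorem hasUnimodularCompletion_of_linearEquiv {m : ℕ} {M : Matrix (Fin k) (Fin n) A}
    (e : (Fin n → A) ≃ₗ[A] (Fin k → A) × (Fin m → A)) (he : ∀ v, (e v).1 = M *ᵥ v) :
    HasUnimodularCompletion M := by
  set e' := e ≪≫ₗ (LinearEquiv.sumArrowLequivProdArrow (Fin k) (Fin m) A A).symm
  set U := LinearMap.toMatrix' (e' : (Fin n → A) →ₗ[A] (Fin k ⊕ Fin m → A)) with hU
  have hM : U.toRows₁ = M := by
    refine Matrix.ext_of_mulVec_single fun j => ?_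
    rw [← he]
    ext i
    simp only [mulVec_single_one, col_apply, toRows₁_apply, hU, LinearMap.toMatrix'_apply]
    rfl
  have hrows : fromRows M U.toRows₂ = U := by rw [← hM, fromRows_toRows]
  refine ⟨m, U.toRows₂, LinearMap.toMatrix' e'.symm, ?_, ?_⟩ <;>
    rw [hrows, hU, ← LinearMap.toMatrix'_comp]
  · rw [e'.comp_symm, LinearMap.toMatrix'_id]
  · rw [e'.symm_comp, LinearMap.toMatrix'_id]

theorem hasUnimodularCompletion_of_mulVecLin_surjective [IsDomain A] [IsPrincipalIdealRing A]
    {M : Matrix (Fin k) (Fin n) A} (hM : Function.Surjective M.mulVecLin) :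
    HasUnimodularCompletion M := by
  obtain ⟨l, hl⟩ := M.mulVecLin.exists_rightInverse_of_surjective (LinearMap.range_eq_top.mpr hM)
  obtain ⟨e, -, he⟩ := M.mulVecLin.exact_subtype_ker_map.splitSurjectiveEquiv
    (Submodule.injective_subtype _) ⟨l, hl⟩
  obtain ⟨m, ⟨b⟩⟩ := Submodule.nonempty_basis_of_pid (Pi.basisFun A (Fin n))
    (LinearMap.ker M.mulVecLin)
  exact hasUnimodularCompletion_of_linearEquiv
    (e ≪≫ₗ LinearEquiv.prodComm .. ≪≫ₗ (LinearEquiv.refl ..).prodCongr b.equivFun)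
    fun v => (LinearMap.congr_fun he v).symm

theorem exists_mul_eq_one_of_map {α β : Type*} [Finite α] [DecidableEq α] [Fintype β]
    {f : A →+* B} (hf : Function.Surjective f) [IsLocalHom f] {U : Matrix α β A}
    {V : Matrix β α B} (hUV : U.map f * V = 1) : ∃ W : Matrix β α A, U * W = 1 := by
  have := Fintype.ofFinite α
  obtain ⟨g, hg⟩ := hf.hasRightInverse
  have hV : (V.map g).map f = V := by ext; simp [hg _]
  have hdet : IsUnit (U * V.map g).det := by
    refine IsUnit.of_map f _ ?_
    rw [RingHom.map_det, RingHom.mapMatrix_apply, Matrix.map_mul, hV, hUV, det_one]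
    exact isUnit_one
  exact ⟨V.map g * (U * V.map g)⁻¹, by rw [← Matrix.mul_assoc, Matrix.mul_nonsing_inv _ hdet]⟩

theorem exists_twoSidedInverse_of_map {α β : Type*} [Fintype α] [DecidableEq α] [Fintype β]
    [DecidableEq β] {f : A →+* B} (hf : Function.Surjective f) [IsLocalHom f] {U : Matrix α β A}
    {V : Matrix β α B} (hUV : U.map f * V = 1) (hVU : V * U.map f = 1) :
    ∃ W : Matrix β α A, U * W = 1 ∧ W * U = 1 := by
  obtain ⟨W, hW⟩ := exists_mul_eq_one_of_map hf hUV
  obtain ⟨W', hW'⟩ := exists_mul_eq_one_of_map (U := Uᵀ) (V := Vᵀ) hf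
    (by rw [transpose_map, ← transpose_mul, hVU, transpose_one])
  have hW'U : W'ᵀ * U = 1 := by simpa using congrArg transpose hW'
  have hWW' : W'ᵀ = W := by
    rw [← Matrix.mul_one W'ᵀ, ← hW, ← Matrix.mul_assoc, hW'U, Matrix.one_mul]
  exact ⟨W, hW, hWW' ▸ hW'U⟩

theorem HasUnimodularCompletion.of_map {f : A →+* B} (hf : Function.Surjective f) [IsLocalHom f]
    {M : Matrix (Fin k) (Fin n) A} (hM : HasUnimodularCompletion (M.map f)) :
    HasUnimodularCompletion M := by
  obtain ⟨m, M', V, hMV, hVM⟩ := hM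
  obtain ⟨g, hg⟩ := hf.hasRightInverse
  have hmap : (fromRows M (M'.map g)).map f = fromRows (M.map f) M' := by
    rw [fromRows_map, Matrix.map_map, hg.id, Matrix.map_id]
  exact ⟨m, M'.map g, exists_twoSidedInverse_of_map hf (hmap ▸ hMV) (hmap ▸ hVM)⟩

end UnimodularCompletion

section ParityCheck

variable {R : Type*} [CommRing R] {k m n : ℕ}

theorem exists_map_toLaurent_eq_unit_smul (N : Matrix (Fin m) (Fin n) R[T;T⁻¹]) :
    ∃ (a : R[T;T⁻¹]ˣ) (K : Matrix (Fin m) (Fin n) R[X]), K.map Polynomial.toLaurent = a • N := by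
  obtain ⟨b, hb⟩ := IsLocalization.exist_integer_multiples_of_finite
    (Submonoid.powers (X : R[X])) fun ij : Fin m × Fin n => N ij.1 ij.2
  choose K hK using hb
  obtain ⟨a, ha⟩ := IsLocalization.map_units R[T;T⁻¹] b
  refine ⟨a, of fun i j => K (i, j), Matrix.ext fun i j => ?_⟩
  rw [Matrix.smul_apply, Units.smul_def, ha, smul_eq_mul, ← Algebra.smul_def]
  exact hK (i, j)

theorem HasUnimodularCompletion.exists_parityCheck {G : Matrix (Fin k) (Fin n) R[X]}
    (hG : HasUnimodularCompletion (G.map Polynomial.toLaurent)) :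
    ∃ (m : ℕ) (K : Matrix (Fin m) (Fin n) R[X]) (L : Matrix (Fin n) (Fin m) R[T;T⁻¹])
      (N : Matrix (Fin n) (Fin k) R[T;T⁻¹]),
      K.map Polynomial.toLaurent * L = 1 ∧
      G.map Polynomial.toLaurent * (K.map Polynomial.toLaurent)ᵀ = 0 ∧
      N * G.map Polynomial.toLaurent + (K.map Polynomial.toLaurent)ᵀ * Lᵀ = 1 := by
  obtain ⟨m, M', V, hUV, hVU⟩ := hG
  rw [← fromCols_toCols V] at hUV hVU
  rw [fromRows_mul_fromCols, ← fromBlocks_one, fromBlocks_inj] at hUV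
  rw [fromCols_mul_fromRows] at hVU
  obtain ⟨-, hGW, -, hMW⟩ := hUV
  obtain ⟨a, K, hK⟩ := exists_map_toLaurent_eq_unit_smul V.toCols₂ᵀ
  refine ⟨m, K, a⁻¹ • M'ᵀ, V.toCols₁, ?_, ?_, ?_⟩
  · rw [hK, Matrix.smul_mul, Matrix.mul_smul, smul_smul, mul_inv_cancel, one_smul,
      ← transpose_mul, hMW, transpose_one]
  · rw [hK, transpose_smul, transpose_transpose, Matrix.mul_smul, hGW, smul_zero]
  · rw [hK, transpose_smul, transpose_smul, transpose_transpose, transpose_transpose,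
      Matrix.smul_mul, Matrix.mul_smul, smul_smul, mul_inv_cancel, one_smul, hVU]

theorem code_eq_dualCode_code {G : Matrix (Fin k) (Fin n) R[X]} {K : Matrix (Fin m) (Fin n) R[X]}
    {N : Matrix (Fin n) (Fin k) (LaurentSeries R)} {L : Matrix (Fin n) (Fin m) (LaurentSeries R)}
    (hGK : G.map (polyToLS R) * (K.map (polyToLS R))ᵀ = 0)
    (hsum : N * G.map (polyToLS R) + (K.map (polyToLS R))ᵀ * Lᵀ = 1) :
    code K = dualCode (code G) := by
  ext v
  rw [mem_dualCode_code]
  constructor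
  · rintro ⟨u, rfl⟩
    rw [← mulVec_transpose, mulVec_mulVec, hGK, zero_mulVec]
  · intro hv
    refine ⟨Lᵀ *ᵥ v, ?_⟩
    calc v = (N * G.map (polyToLS R) + (K.map (polyToLS R))ᵀ * Lᵀ) *ᵥ v := by
          rw [hsum, one_mulVec]
      _ = (Lᵀ *ᵥ v) ᵥ* K.map (polyToLS R) := by
          rw [add_mulVec, ← mulVec_mulVec, hv, mulVec_zero, zero_add, ← mulVec_mulVec,
            mulVec_transpose]

end ParityCheck

section DualOfNonCatastrophic

variable {k n : ℕ}

theorem mulVecLin_surjective_of_nonCatastrophic {F : Type*} [Field F]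
    {G : Matrix (Fin k) (Fin n) F[X]} (hG : NonCatastrophic G) :
    Function.Surjective (G.map Polynomial.toLaurent).mulVecLin := by
  refine mulVecLin_surjective_of_forall_mem_range laurentToSeries_injective
    (not_isField_laurentPolynomial F) fun u hu => ?_
  simp only [← support_finite_iff_mem_range, map_toLaurent_map_laurentToSeries] at hu ⊢
  exact hG u hu

theorem mapRingHom_toLaurent {R S : Type*} [CommRing R] [CommRing S] (φ : R →+* S) (f : R[X]) :
    AddMonoidAlgebra.mapRingHom ℤ φ f.toLaurent = (f.map φ).toLaurent :=
  laurentToSeries_injective (by simp [← seriesMap_laurentToSeries])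

variable {R : Type*} [CommRing R] [IsArtinianRing R] [IsLocalRing R]

theorem hasUnimodularCompletion_of_nonCatastrophic {G : Matrix (Fin k) (Fin n) R[X]}
    (hG : NonCatastrophic G) : HasUnimodularCompletion (G.map Polynomial.toLaurent) := by
  set φ := IsLocalRing.residue R
  have hφ : Function.Surjective φ := IsLocalRing.residue_surjective
  obtain ⟨σ, hσ⟩ := exists_mul_eq_zero_iff_residue_eq_zero R
  have := isLocalHom_mapRingHom hφ isNilpotent_ker_residue
  refine .of_map (mapRingHom_surjective hφ) ?_
  have hmap : (G.map Polynomial.toLaurent).map (AddMonoidAlgebra.mapRingHom ℤ φ) =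
      (G.map (Polynomial.map φ)).map Polynomial.toLaurent := by
    ext1
    simp [mapRingHom_toLaurent]
  rw [hmap]
  exact hasUnimodularCompletion_of_mulVecLin_surjective
    (mulVecLin_surjective_of_nonCatastrophic (nonCatastrophic_map hφ hσ hG))

theorem exists_nonCatastrophic_code_eq_dualCode {G : Matrix (Fin k) (Fin n) R[X]}
    (hG : NonCatastrophic G) :
    ∃ (m : ℕ) (K : Matrix (Fin m) (Fin n) R[X]),
      FullRowRank K ∧ code K = dualCode (code G) ∧ NonCatastrophic K := by
  obtain ⟨m, K, L, N, hKL, hGK, hsum⟩ :=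
    (hasUnimodularCompletion_of_nonCatastrophic hG).exists_parityCheck
  refine ⟨m, K, fullRowRank_iff_exists_rightInverse.mpr ⟨L.map (laurentToSeries R), ?_⟩,
    code_eq_dualCode_code (N := N.map (laurentToSeries R)) (L := L.map (laurentToSeries R)) ?_ ?_,
    nonCatastrophic_of_rightInverse hKL⟩
  · exact map_polyToLS_mul_eq_one hKL
  · rw [← map_toLaurent_map_laurentToSeries, ← map_toLaurent_map_laurentToSeries, ← transpose_map,
      ← Matrix.map_mul, hGK, Matrix.map_zero _ (map_zero _)]
  · rw [← map_toLaurent_map_laurentToSeries, ← map_toLaurent_map_laurentToSeries, ← transpose_map,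
      ← transpose_map (M := L), ← Matrix.map_mul, ← Matrix.map_mul, ← Matrix.map_add _ (map_add _),
      hsum, Matrix.map_one _ (map_zero _) (map_one _)]

theorem not_catastrophicCode_iff {R : Type*} [CommRing R] {C : Set (Fin n → LaurentSeries R)} :
    ¬ CatastrophicCode C ↔ ∃ (m : ℕ) (G : Matrix (Fin m) (Fin n) R[X]),
      FullRowRank G ∧ code G = C ∧ NonCatastrophic G := by
  simp only [CatastrophicCode, NonCatastrophic]
  push Not
  simp only [not_imp_not]

theorem isLocalRing_zmod_prime_pow {p r : ℕ} (hp : p.Prime) (hr : r ≠ 0) :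
    IsLocalRing (ZMod (p ^ r)) := by
  have := Fact.mk hp
  have := Fact.mk (one_lt_pow₀ hp.one_lt hr)
  exact .of_surjective' (PadicInt.toZModPow r) (ZMod.ringHom_surjective _)

end DualOfNonCatastrophic

end ConvolutionalCode

open ConvolutionalCode

theorem catastrophic_iff_dual_catastrophic_general {R : Type*} [CommRing R] [IsArtinianRing R]
    [IsLocalRing R] {k n : ℕ} {G : Matrix (Fin k) (Fin n) R[X]} (hG : FullRowRank G) :
    CatastrophicCode (code G) ↔ CatastrophicCode (dualCode (code G)) := by
  obtain ⟨N, hN⟩ := fullRowRank_iff_exists_rightInverse.mp hG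
  rw [← not_iff_not, not_catastrophicCode_iff, not_catastrophicCode_iff]
  constructor
  · rintro ⟨m, H, -, hHG, hH⟩
    exact hHG ▸ exists_nonCatastrophic_code_eq_dualCode hH
  · rintro ⟨m, K, -, hKG, hK⟩
    rw [← dualCode_dualCode_code hN, ← hKG]
    exact exists_nonCatastrophic_code_eq_dualCode hK

/-- A free convolutional code over `ℤ/p^r` is catastrophic iff its dual code is. -/
theorem catastrophic_iff_dual_catastrophic
    (p : ℕ) (hp : p.Prime) (r : ℕ) (hr : r ≠ 0) (k n : ℕ)
    (G : Matrix (Fin k) (Fin n) (Polynomial (ZMod (p ^ r))))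
    (hG : FullRowRank G) :
    CatastrophicCode (code G) ↔ CatastrophicCode (dualCode (code G)) := by
  have : NeZero (p ^ r) := ⟨pow_ne_zero r hp.ne_zero⟩
  have := isLocalRing_zmod_prime_pow hp hr
  exact catastrophic_iff_dual_catastrophic_general hG
end
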